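/- Let R be a regular local ring of Krull dimension 2, and let 0 → I → F → T → 0 be a short exact sequence of finitely generated R-modules in which I and F are torsion (i.e., killed after tensoring with Frac(R)) and have no nonzero submodule of finite length, and T has finite length. Then the long exact sequence obtained by applying Hom_R(−, R) induces a short exact sequence 0 → Ext^1_R(F, R) → Ext^1_R(I, R) → Ext^2_R(T, R) → 0. -/

import Mathlib

open CategoryTheory

/-- A (commutative, local) ring is a *regular local ring of Krull dimension 2* if it is
Noetherian, has Krull dimension 2, and its maximal ideal is generated by 2 elements. -/
def IsRegularLocalRingOfDimTwo (R : Type*) [CommRing R] [IsLocalRing R] : Prop :=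
  IsNoetherianRing R ∧ ringKrullDim R = 2 ∧
    ∃ x y : R, IsLocalRing.maximalIdeal R = Ideal.span {x, y}

/-!
Put `d + 1 = dim R`. The long exact `Ext(-, R)` sequence reduces the claim to `Ext^d(T, R) = 0` and
`Ext^(d+1)(F, R) = 0`.

A regular local ring is a domain, by induction on the dimension: modulo `x ∈ 𝔪 \ 𝔪²` it stays
regular, so `(x)` is prime, and if `x` avoids the minimal primes then a minimal prime inside `(x)`
vanishes by Nakayama. Hence `𝔪` is generated by a regular sequence of length `d + 1`. The first
vanishing is then Rees' theorem, as `T` is supported at `𝔪`. For the second, the Koszul bound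
`pd (R ⧸ 𝔪) ≤ d + 1` propagates to all finitely generated modules through prime filtrations, and
since `Hom(R ⧸ 𝔪, F) = 0` some `z ∈ 𝔪` is `F`-regular, so that `pd F = pd (F ⧸ zF) - 1 ≤ d`.
-/

open IsLocalRing RingTheory.Sequence
open scoped Pointwise

section LocalRing

variable {R : Type*} [CommRing R] [IsLocalRing R]

theorem exists_span_insert_erase_eq_maximalIdeal [DecidableEq R] {s : Finset R}
    (hs : Ideal.span (s : Set R) = maximalIdeal R) {x : R} (hx : x ∈ maximalIdeal R)
    (hx2 : x ∉ maximalIdeal R ^ 2) :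
    ∃ y ∈ s, Ideal.span (insert x (s.erase y) : Set R) = maximalIdeal R := by
  obtain ⟨c, -, hc⟩ := Submodule.mem_span_finset.1 (hs.ge hx)
  have hsub : (s : Set R) ⊆ maximalIdeal R := hs ▸ Ideal.subset_span
  obtain ⟨y, hys, hunit⟩ : ∃ y ∈ s, IsUnit (c y) := by
    by_contra! hnon
    refine hx2 (hc ▸ sum_mem fun y hy ↦ ?_)
    rw [smul_eq_mul, pow_two]
    exact Ideal.mul_mem_mul ((mem_maximalIdeal _).2 (hnon y hy)) (hsub hy)
  refine ⟨y, hys, le_antisymm (Ideal.span_le.2 (Set.insert_subset hx ?_)) ?_⟩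
  · exact (Finset.coe_subset.2 (s.erase_subset y)).trans hsub
  have hrest : ∑ i ∈ s.erase y, c i • i ∈ Ideal.span (insert x (s.erase y) : Set R) :=
    sum_mem fun i hi ↦ Ideal.mul_mem_left _ _ (Ideal.subset_span (Set.mem_insert_of_mem _ hi))
  have hcy : c y * y ∈ Ideal.span (insert x (s.erase y) : Set R) := by
    rw [← smul_eq_mul, ← add_sub_cancel_right (c y • y), s.add_sum_erase (fun i ↦ c i • i) hys, hc]
    exact sub_mem (Ideal.subset_span (Set.mem_insert _ _)) hrest
  rw [← hs, Ideal.span_le]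
  intro i hi
  obtain rfl | hne := eq_or_ne i y
  · exact (Ideal.unit_mul_mem_iff_mem _ hunit).1 hcy
  · exact Ideal.subset_span (Set.mem_insert_of_mem _ (Finset.mem_erase.2 ⟨hne, hi⟩))

theorem isLocalRing_quotient_span_singleton {x : R} (hx : x ∈ maximalIdeal R) :
    IsLocalRing (R ⧸ Ideal.span {x}) :=
  have := Ideal.Quotient.nontrivial_iff.2
    (ne_top_of_le_ne_top Ideal.IsPrime.ne_top' ((Ideal.span_singleton_le_iff_mem _).2 hx))
  .of_surjective' _ Ideal.Quotient.mk_surjective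

theorem ofList_cons_eq_maximalIdeal {x : R} (hx : x ∈ maximalIdeal R)
    [IsLocalRing (R ⧸ Ideal.span {x})] {rs : List R}
    (hrs : Ideal.ofList (rs.map (Ideal.Quotient.mk (Ideal.span {x}))) =
      maximalIdeal (R ⧸ Ideal.span {x})) :
    Ideal.ofList (x :: rs) = maximalIdeal R := by
  let f := Ideal.Quotient.mk (Ideal.span {x})
  have hf : Function.Surjective f := Ideal.Quotient.mk_surjective
  have hker : RingHom.ker f = Ideal.span {x} := Ideal.mk_ker
  have hker_le : RingHom.ker f ≤ maximalIdeal R :=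
    hker.trans_le ((Ideal.span_singleton_le_iff_mem _).2 hx)
  calc Ideal.ofList (x :: rs)
      = Ideal.ofList rs ⊔ RingHom.ker f := by rw [Ideal.ofList_cons, hker, sup_comm]
    _ = ((Ideal.ofList rs).map f).comap f := (Ideal.comap_map_of_surjective' f hf _).symm
    _ = ((maximalIdeal R).map f).comap f := by
      rw [Ideal.map_ofList, hrs, map_maximalIdeal_of_surjective f hf]
    _ = maximalIdeal R ⊔ RingHom.ker f := Ideal.comap_map_of_surjective' f hf _
    _ = maximalIdeal R := sup_eq_left.2 hker_le

theorem maximalIdeal_notMem_minimalPrimes (hdim : ringKrullDim R ≠ 0) :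
    maximalIdeal R ∉ minimalPrimes R := by
  intro hmin
  rw [← maximalIdeal_height_eq_ringKrullDim, Ideal.height_eq_zero_iff.2 hmin] at hdim
  exact hdim rfl

end LocalRing

section NoetherianLocalRing

variable {R : Type*} [CommRing R] [IsLocalRing R] [IsNoetherianRing R]

theorem spanFinrank_maximalIdeal_quotient_add_one_le {x : R} [IsLocalRing (R ⧸ Ideal.span {x})]
    (hx : x ∈ maximalIdeal R) (hx2 : x ∉ maximalIdeal R ^ 2) :
    (maximalIdeal (R ⧸ Ideal.span {x})).spanFinrank + 1 ≤ (maximalIdeal R).spanFinrank := by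
  classical
  obtain ⟨s, hcard, hs⟩ := Submodule.FG.exists_span_finset_card_eq_spanFinrank
    (maximalIdeal R).fg_of_isNoetherianRing
  obtain ⟨y, hys, hspan⟩ := exists_span_insert_erase_eq_maximalIdeal hs hx hx2
  have hmap : maximalIdeal (R ⧸ Ideal.span {x}) =
      Ideal.span (Ideal.Quotient.mk (Ideal.span {x}) '' (s.erase y : Finset R)) := by
    rw [← map_maximalIdeal_of_surjective _ Ideal.Quotient.mk_surjective, ← hspan, Ideal.map_span,
      Set.image_insert_eq, Ideal.Quotient.mk_singleton_self, Ideal.span_insert_zero]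
  rw [hmap, ← hcard, ← Finset.card_erase_add_one hys]
  gcongr
  refine (Submodule.spanFinrank_span_le_ncard_of_finite ((Finset.finite_toSet _).image _)).trans ?_
  exact (Set.ncard_image_le (Finset.finite_toSet _)).trans (Set.ncard_coe_finset _).le

theorem ringKrullDim_le_ringKrullDim_quotient_span_singleton_add_one {x : R}
    (hx : x ∈ maximalIdeal R) : ringKrullDim R ≤ ringKrullDim (R ⧸ Ideal.span {x}) + 1 := by
  rw [← maximalIdeal_height_eq_ringKrullDim]
  exact Ideal.height_le_ringKrullDim_quotient_add_one hx

theorem maximalIdeal_eq_bot_of_le_sq (h : maximalIdeal R ≤ maximalIdeal R ^ 2) :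
    maximalIdeal R = ⊥ :=
  Submodule.eq_bot_of_le_smul_of_le_jacobson_bot _ _ (maximalIdeal R).fg_of_isNoetherianRing
    (by rwa [smul_eq_mul, ← pow_two]) (jacobson_eq_maximalIdeal _ bot_ne_top).ge

theorem exists_mem_maximalIdeal_notMem_sq_notMem_minimalPrimes (hdim : ringKrullDim R ≠ 0) :
    ∃ x ∈ maximalIdeal R, x ∉ maximalIdeal R ^ 2 ∧ ∀ P ∈ minimalPrimes R, x ∉ P := by
  have hmax := maximalIdeal_notMem_minimalPrimes hdim
  by_contra! hcover
  have hunion : (maximalIdeal R : Set R) ⊆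
      ⋃ I ∈ insert (maximalIdeal R ^ 2) (minimalPrimes R), (I : Set R) := by
    intro x hx
    by_cases hx2 : x ∈ maximalIdeal R ^ 2
    · exact Set.mem_biUnion (Set.mem_insert _ _) hx2
    · obtain ⟨P, hP, hxP⟩ := hcover x hx hx2
      exact Set.mem_biUnion (Set.mem_insert_of_mem _ hP) hxP
  -- Prime avoidance tolerates the non-prime ideal `𝔪 ^ 2`.
  obtain ⟨I, rfl | hI, hle⟩ := (Ideal.subset_union_prime_finite
    ((minimalPrimes.finite_of_isNoetherianRing R).insert _) (maximalIdeal R ^ 2)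
    (maximalIdeal R ^ 2) (fun I hI hne _ ↦ (hI.resolve_left hne).1.1)).1 hunion
  · have hbot := maximalIdeal_eq_bot_of_le_sq hle
    exact hmax ⟨⟨inferInstance, bot_le⟩, fun _ _ _ ↦ hbot.le.trans bot_le⟩
  · exact hmax (hle.antisymm (le_maximalIdeal hI.1.1.ne_top) ▸ hI)

theorem isDomain_of_isPrime_span_singleton {x : R} (hx : x ∈ maximalIdeal R)
    (hprime : (Ideal.span {x}).IsPrime) (hmin : ∀ P ∈ minimalPrimes R, x ∉ P) : IsDomain R := by
  obtain ⟨P, hP, hPx⟩ := Ideal.exists_minimalPrimes_le (bot_le : (⊥ : Ideal R) ≤ Ideal.span {x})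
  have hPprime : P.IsPrime := hP.1.1
  have hP_le : P ≤ Ideal.span {x} • P := by
    intro a ha
    obtain ⟨b, rfl⟩ := Ideal.mem_span_singleton'.1 (hPx ha)
    rw [mul_comm]
    exact Submodule.smul_mem_smul (Ideal.mem_span_singleton_self x)
      ((hPprime.mem_or_mem ha).resolve_right (hmin P hP))
  have hbot : P = ⊥ := Submodule.eq_bot_of_le_smul_of_le_jacobson_bot _ _
    P.fg_of_isNoetherianRing hP_le (((Ideal.span_singleton_le_iff_mem _).2 hx).trans
      (jacobson_eq_maximalIdeal _ bot_ne_top).ge)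
  have : (⊥ : Ideal R).IsPrime := hbot ▸ hPprime
  exact IsDomain.of_bot_isPrime R

end NoetherianLocalRing

section RegularLocalRing

variable {R : Type*} [CommRing R] [IsRegularLocalRing R]

theorem spanFinrank_maximalIdeal_quotient_add_one_le_ringKrullDim {x : R}
    [IsLocalRing (R ⧸ Ideal.span {x})] (hx : x ∈ maximalIdeal R) (hx2 : x ∉ maximalIdeal R ^ 2) :
    ((maximalIdeal (R ⧸ Ideal.span {x})).spanFinrank : WithBot ℕ∞) + 1 ≤ ringKrullDim R := by
  rw [← IsRegularLocalRing.spanFinrank_maximalIdeal]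
  exact_mod_cast spanFinrank_maximalIdeal_quotient_add_one_le hx hx2

theorem isRegularLocalRing_quotient_span_singleton {x : R} (hx : x ∈ maximalIdeal R)
    (hx2 : x ∉ maximalIdeal R ^ 2) : IsRegularLocalRing (R ⧸ Ideal.span {x}) :=
  have := isLocalRing_quotient_span_singleton hx
  .of_spanFinrank_maximalIdeal_le _ <| ENat.WithBot.add_le_add_one_right_iff.1 <|
    (spanFinrank_maximalIdeal_quotient_add_one_le_ringKrullDim hx hx2).trans
      (ringKrullDim_le_ringKrullDim_quotient_span_singleton_add_one hx)

theorem ringKrullDim_quotient_span_singleton_add_one {x : R} (hx : x ∈ maximalIdeal R)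
    (hx2 : x ∉ maximalIdeal R ^ 2) :
    ringKrullDim (R ⧸ Ideal.span {x}) + 1 = ringKrullDim R := by
  have := isLocalRing_quotient_span_singleton hx
  refine le_antisymm ?_ (ringKrullDim_le_ringKrullDim_quotient_span_singleton_add_one hx)
  exact (add_le_add_left (ringKrullDim_le_spanFinrank_maximalIdeal _) 1).trans
    (spanFinrank_maximalIdeal_quotient_add_one_le_ringKrullDim hx hx2)

theorem exists_isRegularLocalRing_quotient_span_singleton {n : ℕ}
    (hn : ringKrullDim R = n + 1) :
    ∃ x ∈ maximalIdeal R, (∀ P ∈ minimalPrimes R, x ∉ P) ∧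
      IsRegularLocalRing (R ⧸ Ideal.span {x}) ∧ ringKrullDim (R ⧸ Ideal.span {x}) = n := by
  have hpos : ringKrullDim R ≠ 0 := by
    rw [hn]
    exact_mod_cast n.succ_ne_zero
  obtain ⟨x, hx, hx2, hxmin⟩ := exists_mem_maximalIdeal_notMem_sq_notMem_minimalPrimes hpos
  have hdim := (ringKrullDim_quotient_span_singleton_add_one hx hx2).trans hn
  exact ⟨x, hx, hxmin, isRegularLocalRing_quotient_span_singleton hx hx2,
    le_antisymm (ENat.WithBot.add_le_add_one_right_iff.1 hdim.le)
      (ENat.WithBot.add_le_add_one_right_iff.1 hdim.ge)⟩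

theorem maximalIdeal_eq_bot_of_ringKrullDim_eq_zero (h : ringKrullDim R = 0) :
    maximalIdeal R = ⊥ := by
  rw [← Submodule.spanFinrank_eq_zero_iff_eq_bot (maximalIdeal R).fg_of_isNoetherianRing]
  exact_mod_cast IsRegularLocalRing.spanFinrank_maximalIdeal.trans h

variable (R) in
theorem isDomain_of_isRegularLocalRing : IsDomain R := by
  have hdim : ringKrullDim R = (maximalIdeal R).spanFinrank :=
    IsRegularLocalRing.spanFinrank_maximalIdeal.symm
  generalize (maximalIdeal R).spanFinrank = n at hdim
  induction n generalizing R with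
  | zero =>
    have hbot := maximalIdeal_eq_bot_of_ringKrullDim_eq_zero hdim
    exact (isField_iff_maximalIdeal_eq.2 hbot).isDomain
  | succ n ih =>
    obtain ⟨x, hx, hxmin, hreg, hquot⟩ :=
      exists_isRegularLocalRing_quotient_span_singleton (by exact_mod_cast hdim)
    have hprime := (Ideal.Quotient.isDomain_iff_prime _).1 (ih _ hquot)
    exact isDomain_of_isPrime_span_singleton hx hprime hxmin

theorem isRegular_cons_iff_quotient_span_singleton {A : Type*} [CommRing A] (x : A) (rs : List A) :
    IsRegular A (x :: rs) ↔ IsSMulRegular A x ∧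
      IsRegular (A ⧸ Ideal.span {x}) (rs.map (Ideal.Quotient.mk (Ideal.span {x}))) := by
  have hsmul : x • (⊤ : Submodule A A) = Ideal.span {x} := by
    rw [← Submodule.ideal_span_singleton_smul, smul_eq_mul, Ideal.mul_top]
  have e : QuotSMulTop x A ≃ₗ[A ⧸ Ideal.span {x}] A ⧸ Ideal.span {x} :=
    (Submodule.quotEquivOfEq _ _ hsmul).extendScalarsOfSurjective Ideal.Quotient.mk_surjective
  rw [isRegular_cons_iff', e.isRegular_congr]

theorem exists_isRegular_ofList_eq_maximalIdeal {n : ℕ} (hn : ringKrullDim R = n) :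
    ∃ rs : List R, rs.length = n ∧ IsRegular R rs ∧ Ideal.ofList rs = maximalIdeal R := by
  induction n generalizing R with
  | zero =>
    exact ⟨[], rfl, IsRegular.nil R R, by
      rw [Ideal.ofList_nil, maximalIdeal_eq_bot_of_ringKrullDim_eq_zero hn]⟩
  | succ n ih =>
    have := isDomain_of_isRegularLocalRing R
    obtain ⟨x, hx, hxmin, hreg, hdim⟩ :=
      exists_isRegularLocalRing_quotient_span_singleton (by exact_mod_cast hn)
    have hx0 : x ≠ 0 := hxmin ⊥ (IsDomain.minimalPrimes_eq_singleton_bot R ▸ rfl)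
    obtain ⟨rs', hlen, hrs, hspan⟩ := ih hdim
    obtain ⟨rs, rfl⟩ := List.map_surjective_iff.2 Ideal.Quotient.mk_surjective rs'
    refine ⟨x :: rs, by simpa using hlen, ?_, ofList_cons_eq_maximalIdeal hx hspan⟩
    exact (isRegular_cons_iff_quotient_span_singleton x rs).2
      ⟨(IsRegular.of_ne_zero hx0).left.isSMulRegular, hrs⟩

end RegularLocalRing

section FiniteLength

variable {R M : Type*} [CommRing R] [IsLocalRing R] [AddCommGroup M] [Module R M]

theorem support_subset_zeroLocus_maximalIdeal_of_isFiniteLength (hM : IsFiniteLength R M) :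
    Module.support R M ⊆ PrimeSpectrum.zeroLocus (maximalIdeal R) := by
  induction hM with
  | of_subsingleton => simp [Module.support_eq_empty]
  | @of_simple_quotient M _ _ N _ _ ih =>
    have hann : Module.annihilator R (M ⧸ N) = maximalIdeal R :=
      eq_maximalIdeal IsSimpleModule.annihilator_isMaximal
    rw [Module.support_of_exact (LinearMap.exact_subtype_mkQ N) N.subtype_injective
      N.mkQ_surjective, Module.support_eq_zeroLocus (M := M ⧸ N), hann]
    exact Set.union_subset ih le_rfl

variable (R) in
theorem isFiniteLength_quotient_maximalIdeal : IsFiniteLength R (R ⧸ maximalIdeal R) := by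
  have : IsSimpleModule R (R ⧸ maximalIdeal R) :=
    isSimpleModule_iff_isCoatom.2 (maximalIdeal.isMaximal R).1
  exact isFiniteLength_iff_isNoetherian_isArtinian.2 ⟨inferInstance, inferInstance⟩

theorem subsingleton_linearMap_quotient_maximalIdeal
    (hM : ∀ N : Submodule R M, IsFiniteLength R N → N = ⊥) :
    Subsingleton ((R ⧸ maximalIdeal R) →ₗ[R] M) :=
  subsingleton_of_forall_eq 0 fun f ↦ LinearMap.range_eq_bot.1 <|
    hM _ ((isFiniteLength_quotient_maximalIdeal R).of_surjective f.surjective_rangeRestrict)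

theorem exists_mem_maximalIdeal_isSMulRegular [IsNoetherianRing R] [Module.Finite R M]
    (hM : ∀ N : Submodule R M, IsFiniteLength R N → N = ⊥) :
    ∃ z ∈ maximalIdeal R, IsSMulRegular M z := by
  have := subsingleton_linearMap_quotient_maximalIdeal hM
  simpa only [Ideal.annihilator_quotient] using IsSMulRegular.subsingleton_linearMap_iff.1 this

end FiniteLength

section ProjectiveDimension

universe u

variable {R : Type u} [CommRing R] [IsNoetherianRing R] {n : ℕ}

theorem hasProjectiveDimensionLT_of_forall_isPrime {I : Ideal R}
    (h : ∀ p : Ideal R, p.IsPrime → I ≤ p → HasProjectiveDimensionLT (ModuleCat.of R (R ⧸ p)) n)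
    (M : Type u) [AddCommGroup M] [Module R M] [Module.Finite R M]
    (hM : I ≤ Module.annihilator R M) : HasProjectiveDimensionLT (ModuleCat.of R M) n := by
  induction ‹Module.Finite R M› using
    IsNoetherianRing.induction_on_isQuotientEquivQuotientPrime R with
  | subsingleton N =>
    have := (ModuleCat.isZero_of_subsingleton (ModuleCat.of R N)).hasProjectiveDimensionLT_zero
    exact hasProjectiveDimensionLT_of_ge _ 0 n n.zero_le
  | quotient N p e =>
    rw [e.annihilator_eq, Ideal.annihilator_quotient] at hM
    have := h p.1 p.2 hM
    exact hasProjectiveDimensionLT_of_iso e.symm.toModuleIso n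
  | exact N₁ N₂ N₃ f g hf hg hfg h₁ h₃ =>
    let S : ShortComplex (ModuleCat.{u} R) :=
      ⟨ModuleCat.ofHom f, ModuleCat.ofHom g, ModuleCat.hom_ext hfg.linearMap_comp_eq_zero⟩
    have hS : S.ShortExact := ModuleCat.shortComplex_shortExact S hfg hf hg
    exact hS.hasProjectiveDimensionLT_X₂ n (h₁ (hM.trans (f.annihilator_le_of_injective hf)))
      (h₃ (hM.trans (g.annihilator_le_of_surjective hg)))

variable [IsLocalRing R]

theorem hasProjectiveDimensionLT_of_quotSMulTop {M : ModuleCat.{u} R} [Module.Finite R M] {x : R}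
    (hx : x ∈ maximalIdeal R) (hreg : IsSMulRegular M x)
    (h : HasProjectiveDimensionLT (ModuleCat.of R (QuotSMulTop x M)) (n + 1)) :
    HasProjectiveDimensionLT M n := by
  rw [← projectiveDimension_lt_iff,
    ModuleCat.projectiveDimension_quotSMulTop_eq_succ_of_isSMulRegular M x hreg hx] at h
  rw [← projectiveDimension_lt_iff]
  exact lt_of_add_lt_add_right (by exact_mod_cast h)

theorem isSMulRegular_quotient_of_notMem {A : Type*} [CommRing A] {p : Ideal A} [p.IsPrime] {x : A}
    (hx : x ∉ p) : IsSMulRegular (A ⧸ p) x := by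
  rw [isSMulRegular_iff_right_eq_zero_of_smul]
  intro a ha
  rw [Algebra.smul_def] at ha
  exact (mul_eq_zero.1 ha).resolve_left (Ideal.Quotient.eq_zero_iff_mem.not.2 hx)

theorem hasProjectiveDimensionLT_quotient_of_isPrime
    (hk : HasProjectiveDimensionLT (ModuleCat.of R (R ⧸ maximalIdeal R)) n)
    (p : Ideal R) (hp : p.IsPrime) : HasProjectiveDimensionLT (ModuleCat.of R (R ⧸ p)) n := by
  induction p using WellFoundedGT.induction with
  | ind p ih =>
    obtain rfl | hne := eq_or_ne p (maximalIdeal R)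
    · exact hk
    obtain ⟨x, hx, hxp⟩ := Set.exists_of_ssubset ((le_maximalIdeal hp.ne_top).lt_of_ne hne)
    have hquot : HasProjectiveDimensionLT (ModuleCat.of R (QuotSMulTop x (R ⧸ p))) n := by
      refine hasProjectiveDimensionLT_of_forall_isPrime (I := p ⊔ Ideal.span {x})
        (fun q hq hle ↦ ih q ?_ hq) _ (sup_le ?_ ?_)
      · exact SetLike.lt_iff_le_and_exists.2 ⟨le_sup_left.trans hle, x,
          hle (Ideal.mem_sup_right (Ideal.mem_span_singleton_self x)), hxp⟩
      · exact Ideal.annihilator_quotient.ge.trans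
          ((Submodule.mkQ _).annihilator_le_of_surjective (Submodule.mkQ_surjective _))
      · exact (Ideal.span_singleton_le_iff_mem _).2 (QuotSMulTop.mem_annihilator _ x)
    exact hasProjectiveDimensionLT_of_quotSMulTop hx (isSMulRegular_quotient_of_notMem hxp)
      (hasProjectiveDimensionLT_of_ge _ _ _ n.le_succ)

theorem hasProjectiveDimensionLT_of_quotient_maximalIdeal
    (hk : HasProjectiveDimensionLT (ModuleCat.of R (R ⧸ maximalIdeal R)) n)
    (M : ModuleCat.{u} R) [Module.Finite R M] : HasProjectiveDimensionLT M n :=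
  hasProjectiveDimensionLT_of_forall_isPrime (I := ⊥)
    (fun p hp _ ↦ hasProjectiveDimensionLT_quotient_of_isPrime hk p hp) M bot_le

variable {rs : List R}

theorem hasProjectiveDimensionLT_quotient_ofList (hrs : IsRegular R rs) :
    HasProjectiveDimensionLT (ModuleCat.of R (R ⧸ Ideal.ofList rs)) (rs.length + 1) := by
  have : HasProjectiveDimensionLT (ModuleCat.of R (Shrink.{u} (R ⧸ Ideal.ofList rs)))
      (rs.length + 1) := by
    rw [← projectiveDimension_lt_iff, ModuleCat.projectiveDimension_quotient_eq_length rs hrs]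
    exact_mod_cast rs.length.lt_succ_self
  exact hasProjectiveDimensionLT_of_iso (Shrink.linearEquiv R _).toModuleIso _

theorem hasProjectiveDimensionLT_length (hrs : IsRegular R rs)
    (hspan : Ideal.ofList rs = maximalIdeal R) {M : ModuleCat.{u} R} [Module.Finite R M]
    (hM : ∀ N : Submodule R M, IsFiniteLength R N → N = ⊥) :
    HasProjectiveDimensionLT M rs.length := by
  obtain ⟨z, hz, hreg⟩ := exists_mem_maximalIdeal_isSMulRegular hM
  have hk := hspan ▸ hasProjectiveDimensionLT_quotient_ofList hrs
  exact hasProjectiveDimensionLT_of_quotSMulTop hz hreg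
    (hasProjectiveDimensionLT_of_quotient_maximalIdeal hk _)

end ProjectiveDimension

section Ext

universe w u

theorem subsingleton_ext_of_isFiniteLength {R : Type u} [CommRing R] [IsLocalRing R]
    [IsNoetherianRing R] [HasExt.{w} (ModuleCat.{u} R)] {T M : ModuleCat.{u} R}
    (hT : IsFiniteLength R T) [Module.Finite R M] {rs : List R} (hrs : IsRegular M rs) {i : ℕ}
    (hi : i < rs.length) : Subsingleton (Abelian.Ext T M i) := by
  have := (isFiniteLength_iff_isNoetherian_isArtinian.1 hT).1
  have := hrs.nontrivial
  have hle : Ideal.ofList rs ≤ maximalIdeal R := le_maximalIdeal fun h ↦ hrs.2 (by simp [h])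
  have hlt : maximalIdeal R • (⊤ : Submodule R M) < ⊤ :=
    (Submodule.top_ne_ideal_smul_of_le_jacobson_annihilator
      (maximalIdeal_le_jacobson _)).symm.lt_top
  have := ModuleCat.subsingleton_ext_of_exists_isRegular _ T
    (support_subset_zeroLocus_maximalIdeal_of_isFiniteLength hT) M hlt rs
    (fun _ hr ↦ hle (Ideal.subset_span hr)) hrs i hi
  exact Abelian.Ext.chgUniv.symm.subsingleton

theorem ext_short_exact_of_subsingleton {C : Type*} [Category* C] [Abelian C] [HasExt.{w} C]
    {S : ShortComplex C} (hS : S.ShortExact) {Y : C} {n : ℕ} [Subsingleton (Abelian.Ext S.X₃ Y n)]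
    [Subsingleton (Abelian.Ext S.X₂ Y (n + 1))] :
    Function.Injective (fun x : Abelian.Ext S.X₂ Y n =>
        (Abelian.Ext.mk₀ S.f).comp x (zero_add n)) ∧
      Function.Surjective (fun y : Abelian.Ext S.X₁ Y n =>
        hS.extClass.comp y (add_comm 1 n)) ∧
      ∀ y : Abelian.Ext S.X₁ Y n,
        hS.extClass.comp y (add_comm 1 n) = 0 ↔
          ∃ x : Abelian.Ext S.X₂ Y n, (Abelian.Ext.mk₀ S.f).comp x (zero_add n) = y := by
  refine ⟨?_, fun z ↦ ?_, fun y ↦ ⟨?_, ?_⟩⟩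
  · refine (injective_iff_map_eq_zero ((Abelian.Ext.mk₀ S.f).precomp Y (zero_add n))).2 ?_
    intro x hx
    obtain ⟨t, rfl⟩ := Abelian.Ext.contravariant_sequence_exact₂ hS Y x hx
    rw [Subsingleton.elim t 0, Abelian.Ext.comp_zero]
  · exact Abelian.Ext.contravariant_sequence_exact₃ hS Y z (Subsingleton.elim _ _) (add_comm 1 n)
  · exact Abelian.Ext.contravariant_sequence_exact₁ hS Y y (add_comm 1 n)
  · rintro ⟨x, rfl⟩
    simp

theorem ext_short_exact_of_thickening_general {R : Type u} [CommRing R] [IsRegularLocalRing R]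
    [HasExt.{w} (ModuleCat.{u} R)] {d : ℕ} (hd : ringKrullDim R = d + 1)
    {S : ShortComplex (ModuleCat.{u} R)} (hS : S.ShortExact) [Module.Finite R S.X₂]
    (hpure : ∀ N : Submodule R S.X₂, IsFiniteLength R N → N = ⊥) (hlen : IsFiniteLength R S.X₃) :
    Function.Injective (fun x : Abelian.Ext S.X₂ (ModuleCat.of R R) d =>
        (Abelian.Ext.mk₀ S.f).comp x (zero_add d)) ∧
      Function.Surjective (fun y : Abelian.Ext S.X₁ (ModuleCat.of R R) d =>
        hS.extClass.comp y (add_comm 1 d)) ∧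
      ∀ y : Abelian.Ext S.X₁ (ModuleCat.of R R) d,
        hS.extClass.comp y (add_comm 1 d) = 0 ↔
          ∃ x : Abelian.Ext S.X₂ (ModuleCat.of R R) d,
            (Abelian.Ext.mk₀ S.f).comp x (zero_add d) = y := by
  obtain ⟨rs, hrs_length, hrs, hspan⟩ :=
    exists_isRegular_ofList_eq_maximalIdeal (R := R) (n := d + 1) (by exact_mod_cast hd)
  have : Subsingleton (Abelian.Ext S.X₃ (ModuleCat.of R R) d) :=
    subsingleton_ext_of_isFiniteLength hlen hrs (by lia)
  have : HasProjectiveDimensionLT S.X₂ (d + 1) :=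
    hrs_length ▸ hasProjectiveDimensionLT_length hrs hspan hpure
  have : Subsingleton (Abelian.Ext S.X₂ (ModuleCat.of R R) (d + 1)) :=
    HasProjectiveDimensionLT.subsingleton S.X₂ (d + 1) (d + 1) le_rfl _
  exact ext_short_exact_of_subsingleton hS

end Ext

theorem IsRegularLocalRingOfDimTwo.isRegularLocalRing {R : Type*} [CommRing R] [IsLocalRing R]
    (h : IsRegularLocalRingOfDimTwo R) : IsRegularLocalRing R := by
  obtain ⟨hnoeth, hdim, x, y, hm⟩ := h
  have hrank : (maximalIdeal R).spanFinrank ≤ 2 := by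
    rw [hm]
    exact (Submodule.spanFinrank_span_le_ncard_of_finite (Set.toFinite _)).trans
      ((Set.ncard_insert_le x {y}).trans_eq (by rw [Set.ncard_singleton]))
  refine .of_spanFinrank_maximalIdeal_le R ?_
  rw [hdim]
  exact_mod_cast hrank

/-- Let `R` be a regular local ring of Krull dimension `2` and let
`0 → I → F → T → 0` be a short exact sequence of finitely generated `R`-modules where `I`
and `F` are torsion with no nonzero finite-length submodule and `T` has finite length.
Then applying `Hom_R(−, R)` induces a short exact sequence
`0 → Ext¹(F, R) → Ext¹(I, R) → Ext²(T, R) → 0`, where the first map is composition with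
(the degree-zero Ext class of) `I → F` and the second is composition with the extension
class of the sequence. -/
theorem ext_short_exact_of_thickening {R : Type u} [CommRing R] [IsLocalRing R]
    (hreg : IsRegularLocalRingOfDimTwo R)
    (S : ShortComplex (ModuleCat.{u} R)) (hS : S.ShortExact)
    (hIfg : Module.Finite R ↥S.X₁) (hFfg : Module.Finite R ↥S.X₂)
    (hTfg : Module.Finite R ↥S.X₃)
    (hItors : Module.IsTorsion R ↥S.X₁) (hFtors : Module.IsTorsion R ↥S.X₂)
    (hIpure : ∀ N : Submodule R ↥S.X₁, IsFiniteLength R ↥N → N = ⊥)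
    (hFpure : ∀ N : Submodule R ↥S.X₂, IsFiniteLength R ↥N → N = ⊥)
    (hTlen : IsFiniteLength R ↥S.X₃) :
    haveI : HasExt.{u + 1} (ModuleCat.{u} R) :=
      letI := HasDerivedCategory.standard (ModuleCat.{u} R)
      hasExt_of_hasDerivedCategory _
    Function.Injective (fun x : Abelian.Ext S.X₂ (ModuleCat.of R R) 1 =>
        (Abelian.Ext.mk₀ S.f).comp x (zero_add 1)) ∧
      Function.Surjective (fun y : Abelian.Ext S.X₁ (ModuleCat.of R R) 1 =>
        hS.extClass.comp y rfl) ∧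
      ∀ y : Abelian.Ext S.X₁ (ModuleCat.of R R) 1,
        hS.extClass.comp y rfl = 0 ↔
          ∃ x : Abelian.Ext S.X₂ (ModuleCat.of R R) 1,
            (Abelian.Ext.mk₀ S.f).comp x (zero_add 1) = y := by
  have := hreg.isRegularLocalRing
  have : HasExt.{u + 1} (ModuleCat.{u} R) := HasExt.standard _
  exact ext_short_exact_of_thickening_general.{u + 1} (d := 1)
    (hreg.2.1.trans one_add_one_eq_two.symm) hS hFpure hTlen
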